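/- Let δ > 0 and assume p ≥ 2. Set U_M = 4 σ² (δ+1) ν_r^{-2} ‖Ψ_M‖_F² ln p, and let θ̂ be any minimizer over the simplex Θ_𝓜 = {θ : θ_M ≥ 0 for all M ∈ 𝓜, Σ_{M∈𝓜} θ_M = 1} of Σ_{M∈𝓜} θ_M ( ‖z − f̂_M‖² + 2 U_M ) + ‖z − Σ_{M∈𝓜} θ_M f̂_M‖², and put f̂_{θ̂} = Σ_{M∈𝓜} θ̂_M f̂_M. Then with probability at least 1 − √(2/π) p^{−δ}, one has ‖f̂_{θ̂} − f‖² ≤ min_{M ∈ 𝓜} { ‖f_M − f‖² + 10 ν_r^{-2} σ² (δ+1) ‖Ψ_M‖_F² ln p }. -/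

import Mathlib

open MeasureTheory ProbabilityTheory Matrix Finset

noncomputable section

/-- Squared Euclidean norm of a vector in `ℝ^k`. -/
def sqnorm {k : ℕ} (v : Fin k → ℝ) : ℝ := ∑ i, v i ^ 2

/-- Euclidean inner product on `ℝ^k`. -/
def ip {k : ℕ} (u v : Fin k → ℝ) : ℝ := ∑ i, u i * v i

/-- The `j`-th column of a matrix. -/
def colv {a b : ℕ} (B : Matrix (Fin a) (Fin b) ℝ) (j : Fin b) : Fin a → ℝ := fun i => B i j

/-- The matrix `B_M`: the columns of `B` outside `M` are replaced by zero. -/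
def restr {a b : ℕ} (B : Matrix (Fin a) (Fin b) ℝ) (M : Finset (Fin b)) :
    Matrix (Fin a) (Fin b) ℝ := fun i j => if j ∈ M then B i j else 0

/-- Squared Frobenius norm of a matrix. -/
def frob2 {a b : ℕ} (B : Matrix (Fin a) (Fin b) ℝ) : ℝ := ∑ j, sqnorm (colv B j)

/-- `x` has at most `r` nonzero coordinates. -/
def sparse {k : ℕ} (r : ℕ) (x : Fin k → ℝ) : Prop := (Function.support x).ncard ≤ r

/-- `H` is the orthogonal projection matrix of `ℝ^m` onto `span{φ_j : j ∈ M}`: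
symmetric, idempotent, with range equal to the span of the columns of `Φ` indexed by `M`. -/
def IsProjOnto {m p : ℕ} (Φ : Matrix (Fin m) (Fin p) ℝ) (M : Finset (Fin p))
    (H : Matrix (Fin m) (Fin m) ℝ) : Prop :=
  H.IsSymm ∧ H * H = H ∧
    LinearMap.range H.mulVecLin = Submodule.span ℝ (colv Φ '' (M : Set (Fin p)))

/-- `Ψ = A (AᵀA)⁻¹ Φ`. -/
def Psi {n m p : ℕ} (A : Matrix (Fin n) (Fin m) ℝ) (Φ : Matrix (Fin m) (Fin p) ℝ) :
    Matrix (Fin n) (Fin p) ℝ := A * (Aᵀ * A)⁻¹ * Φ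

/-- `z = (AᵀA)⁻¹ Aᵀ y` where `y = A f + σ e`. -/
def zv {n m : ℕ} (A : Matrix (Fin n) (Fin m) ℝ) (f : Fin m → ℝ) (σ : ℝ) (e : Fin n → ℝ) :
    Fin m → ℝ := ((Aᵀ * A)⁻¹ * Aᵀ).mulVec (A.mulVec f + σ • e)

/-- `ξ = (AᵀA)⁻¹ Aᵀ e`. -/
def xiv {n m : ℕ} (A : Matrix (Fin n) (Fin m) ℝ) (e : Fin n → ℝ) : Fin m → ℝ :=
  ((Aᵀ * A)⁻¹ * Aᵀ).mulVec e

/-- The collection `𝓜` of models of size at most `r/2`. -/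
def models (p r : ℕ) : Finset (Finset (Fin p)) := Finset.univ.filter fun M => 2 * M.card ≤ r

open scoped Classical in
/-- The restricted collection `𝓜_γ = {M ∈ 𝓜 : ‖Ψ_M‖_F² ≤ γ²n}`. -/
def modelsG {n m p : ℕ} (r : ℕ) (A : Matrix (Fin n) (Fin m) ℝ) (Φ : Matrix (Fin m) (Fin p) ℝ)
    (γ : ℝ) : Finset (Finset (Fin p)) :=
  Finset.univ.filter fun M => 2 * M.card ≤ r ∧ frob2 (restr (Psi A Φ) M) ≤ γ ^ 2 * (n : ℝ)

/-- The aggregated estimator `f̂_θ = ∑_{M ∈ C} θ_M f̂_M`, where `f̂_M = H_M z`. -/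
def aggEst {m p : ℕ} (C : Finset (Finset (Fin p)))
    (H : Finset (Fin p) → Matrix (Fin m) (Fin m) ℝ) (zvec : Fin m → ℝ)
    (θ : Finset (Fin p) → ℝ) : Fin m → ℝ :=
  ∑ M ∈ C, θ M • (H M).mulVec zvec

/-- The penalty `U_M = 4σ²(δ+1)ν_r⁻² ‖Ψ_M‖_F² ln p`. -/
def Ufun {n m p : ℕ} (A : Matrix (Fin n) (Fin m) ℝ) (Φ : Matrix (Fin m) (Fin p) ℝ)
    (σ δ ν2 : ℝ) (M : Finset (Fin p)) : ℝ :=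
  4 * σ ^ 2 * (δ + 1) / ν2 * frob2 (restr (Psi A Φ) M) * Real.log p

/-- The Q-aggregation criterion (with `α = 1/2`, multiplied by 2):
`∑_M θ_M (‖z - f̂_M‖² + 2U_M) + ‖z - f̂_θ‖²`. -/
def aggCrit {m p : ℕ} (C : Finset (Finset (Fin p)))
    (H : Finset (Fin p) → Matrix (Fin m) (Fin m) ℝ) (zvec : Fin m → ℝ)
    (U : Finset (Fin p) → ℝ) (θ : Finset (Fin p) → ℝ) : ℝ :=
  ∑ M ∈ C, θ M * (sqnorm (zvec - (H M).mulVec zvec) + 2 * U M) +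
    sqnorm (zvec - aggEst C H zvec θ)

lemma gauss_tail (t : ℝ) (ht : 1 ≤ t) :
    gaussianReal 0 1 {x | t < |x|} ≤ ENNReal.ofReal (Real.sqrt (2 / Real.pi) * Real.exp (-(t ^ 2) / 2)) := by
  have hder : ∀ x ∈ Set.Ici t, HasDerivAt (fun x : ℝ => -Real.exp (-(x ^ 2) / 2))
      (x * Real.exp (-(x ^ 2) / 2)) x := by
    intro x _
    have h1 : HasDerivAt (fun x : ℝ => -(x ^ 2) / 2) (-x) x := by
      have := ((hasDerivAt_pow 2 x).neg).div_const 2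
      convert! this using 1
      simp; ring
    have := h1.exp.neg
    convert! this using 1
    ring
  have hint : IntegrableOn (fun x : ℝ => x * Real.exp (-(x ^ 2) / 2)) (Set.Ioi t) := by
    have := (integrable_mul_exp_neg_mul_sq (b := 1 / 2) (by norm_num)).integrableOn (s := Set.Ioi t)
    refine this.congr_fun (fun x _ => ?_) measurableSet_Ioi
    simp only
    congr 2; ring
  have hlim : Filter.Tendsto (fun x : ℝ => -Real.exp (-(x ^ 2) / 2)) Filter.atTop (nhds (-0)) := by
    refine Filter.Tendsto.neg (Real.tendsto_exp_atBot.comp ?_)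
    have h2 : Filter.Tendsto (fun x : ℝ => x ^ 2 / 2) Filter.atTop Filter.atTop :=
      (Filter.tendsto_pow_atTop (by norm_num)).atTop_div_const (by norm_num)
    refine (Filter.tendsto_neg_atTop_atBot.comp h2).congr (fun x => ?_)
    simp [neg_div]
  have hI := integral_Ioi_of_hasDerivAt_of_tendsto' hder hint hlim
  have hpdf : ∀ x, gaussianPDFReal 0 1 x = (Real.sqrt (2 * Real.pi))⁻¹ * Real.exp (-(x ^ 2) / 2) := by
    intro x; simp [gaussianPDFReal]
  have hone : gaussianReal 0 1 (Set.Ioi t) ≤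
      ENNReal.ofReal ((Real.sqrt (2 * Real.pi))⁻¹ * Real.exp (-(t ^ 2) / 2)) := by
    rw [gaussianReal_apply_eq_integral 0 (by norm_num)]
    apply ENNReal.ofReal_le_ofReal
    have : ∫ x in Set.Ioi t, gaussianPDFReal 0 1 x ≤
        ∫ x in Set.Ioi t, (Real.sqrt (2 * Real.pi))⁻¹ * (x * Real.exp (-(x ^ 2) / 2)) := by
      refine setIntegral_mono_on (integrable_gaussianPDFReal 0 1).integrableOn
        (hint.const_mul _) measurableSet_Ioi (fun x hx => ?_)
      rw [hpdf]
      have hx1 : 1 ≤ x := ht.trans (le_of_lt hx)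
      have := Real.exp_pos (-(x ^ 2) / 2)
      gcongr
      nlinarith
    refine this.trans (le_of_eq ?_)
    rw [integral_const_mul, hI]
    ring
  have hneg : gaussianReal 0 1 (Set.Iio (-t)) = gaussianReal 0 1 (Set.Ioi t) := by
    have h := gaussianReal_map_neg (μ := 0) (v := 1)
    rw [neg_zero] at h
    conv_lhs => rw [← h]
    rw [Measure.map_apply measurable_neg measurableSet_Iio]
    congr 1
    ext x; simp
  have hset : {x : ℝ | t < |x|} = Set.Ioi t ∪ Set.Iio (-t) := by
    ext x
    simp only [Set.mem_ofPred_eq, lt_abs, Set.mem_union, Set.mem_Ioi, Set.mem_Iio]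
    constructor <;> rintro (h | h) <;> [left; right; left; right] <;> linarith
  rw [hset]
  refine (measure_union_le _ _).trans ?_
  rw [hneg]
  refine (add_le_add hone hone).trans ?_
  rw [← ENNReal.ofReal_add (by positivity) (by positivity)]
  apply ENNReal.ofReal_le_ofReal
  apply le_of_eq
  rw [← two_mul, ← mul_assoc]
  congr 1
  rw [← Real.sqrt_inv]
  have : (2 : ℝ) = Real.sqrt 4 := by
    rw [show (4 : ℝ) = 2 ^ 2 by norm_num, Real.sqrt_sq (by norm_num)]
  conv_lhs => lhs; rw [this]
  rw [← Real.sqrt_mul (by norm_num)]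
  congr 1
  have := Real.pi_pos
  field_simp
  norm_num

lemma gauss_law {n : ℕ} (a : Fin n → ℝ) (ha : sqnorm a = 1) :
    (Measure.pi fun _ : Fin n => gaussianReal 0 1).map (fun e => ip a e) = gaussianReal 0 1 := by
  let L : StrongDual ℝ (EuclideanSpace ℝ (Fin n)) := innerSL ℝ (WithLp.toLp 2 a)
  have h1 : (stdGaussian (EuclideanSpace ℝ (Fin n))).map L = gaussianReal 0 1 := by
    rw [IsGaussian.map_eq_gaussianReal, integral_strongDual_stdGaussian, variance_dual_stdGaussian]
    have : ‖L‖ ^ 2 = 1 := by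
      simp only [L, innerSL_apply_norm]
      rw [EuclideanSpace.norm_sq_eq, ← ha]
      simp [sqnorm]
    rw [this]; simp
  rw [← map_pi_eq_stdGaussian, Measure.map_map (by fun_prop) (by fun_prop)] at h1
  refine Eq.trans ?_ h1
  congr 1
  ext e
  simp [L, ip, PiLp.inner_apply, mul_comm]

lemma gauss_lin_tail {n : ℕ} (a : Fin n → ℝ) (t : ℝ) (ht : 1 ≤ t) :
    (Measure.pi fun _ : Fin n => gaussianReal 0 1) {e | t ^ 2 * sqnorm a < ip a e ^ 2} ≤
      ENNReal.ofReal (Real.sqrt (2 / Real.pi) * Real.exp (-(t ^ 2) / 2)) := by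
  have hnn : 0 ≤ sqnorm a := Finset.sum_nonneg fun i _ => sq_nonneg _
  rcases hnn.eq_or_lt with h0 | hpos
  · have ha : ∀ i, a i = 0 := by
      intro i
      have := (Finset.sum_eq_zero_iff_of_nonneg (fun i _ => sq_nonneg (a i))).1 h0.symm i (mem_univ i)
      exact pow_eq_zero_iff (two_ne_zero) |>.1 this
    have : {e : Fin n → ℝ | t ^ 2 * sqnorm a < ip a e ^ 2} = ∅ := by
      ext e
      simp [ip, ha, ← h0]
    rw [this]; simp
  · set s := Real.sqrt (sqnorm a) with hs
    have hspos : 0 < s := Real.sqrt_pos.2 hpos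
    have hss : s ^ 2 = sqnorm a := Real.sq_sqrt hnn
    set b : Fin n → ℝ := fun i => a i / s with hb
    have hb1 : sqnorm b = 1 := by
      have : sqnorm b = sqnorm a / s ^ 2 := by
        simp only [sqnorm, hb, div_pow, Finset.sum_div]
      rw [this, hss, div_self hpos.ne']
    have hip : ∀ e, ip a e = s * ip b e := by
      intro e
      simp only [ip, hb, Finset.mul_sum]
      refine Finset.sum_congr rfl fun i _ => ?_
      field_simp
    have hm : Measurable (fun e : Fin n → ℝ => ip b e) := by unfold ip; fun_prop
    refine le_trans (le_of_eq ?_) (gauss_tail t ht)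
    have hl := Measure.map_apply (μ := Measure.pi fun _ : Fin n => gaussianReal 0 1) hm
      (s := {x | t < |x|}) ?_
    · rw [gauss_law b hb1] at hl
      rw [hl]
      congr 1
      ext e
      change t ^ 2 * sqnorm a < ip a e ^ 2 ↔ t < |ip b e|
      rw [hip, ← hss, mul_pow, mul_comm, mul_lt_mul_iff_right₀ (by positivity),
        sq_lt_sq, abs_of_nonneg (by linarith : 0 ≤ t)]
    · exact measurableSet_lt measurable_const (by fun_prop)

lemma sqnorm_eq {k : ℕ} (v : Fin k → ℝ) : sqnorm v = v ⬝ᵥ v := by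
  simp [sqnorm, dotProduct, sq]

lemma sqnorm_nonneg' {k : ℕ} (v : Fin k → ℝ) : 0 ≤ sqnorm v :=
  Finset.sum_nonneg fun i _ => sq_nonneg _

lemma frob2_restr {a b : ℕ} (B : Matrix (Fin a) (Fin b) ℝ) (M : Finset (Fin b)) :
    frob2 (restr B M) = ∑ j ∈ M, sqnorm (colv B j) := by
  rw [frob2, ← Finset.sum_filter_add_sum_filter_not univ (fun j => j ∈ M)]
  have h2 : ∑ j ∈ univ.filter (fun j => ¬ j ∈ M), sqnorm (colv (restr B M) j) = 0 := by
    refine Finset.sum_eq_zero fun j hj => ?_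
    simp only [mem_filter, mem_univ, true_and] at hj
    simp [sqnorm, colv, restr, hj]
  rw [h2, add_zero]
  have h3 : univ.filter (fun j => j ∈ M) = M := by ext; simp
  rw [h3]
  refine Finset.sum_congr rfl fun j hj => ?_
  simp [sqnorm, colv, restr, hj]

/-- Elements of the range of the projection are `Φ x` with `x` supported on `M`. -/
lemma proj_mem {m p : ℕ} {Φ : Matrix (Fin m) (Fin p) ℝ} {M : Finset (Fin p)}
    {H : Matrix (Fin m) (Fin m) ℝ} (hH : IsProjOnto Φ M H) (v : Fin m → ℝ) :
    ∃ x : Fin p → ℝ, (∀ j, j ∉ M → x j = 0) ∧ H.mulVec v = Φ.mulVec x := by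
  have hmem : H.mulVec v ∈ Submodule.span ℝ (colv Φ '' (M : Set (Fin p))) := by
    rw [← hH.2.2]; exact ⟨v, rfl⟩
  rw [Submodule.mem_span_image_finset_iff_exists_fun'] at hmem
  obtain ⟨c, hc⟩ := hmem
  refine ⟨fun j => if j ∈ M then c j else 0, fun j hj => by simp [hj], ?_⟩
  rw [← hc]
  ext i
  simp only [Finset.sum_apply, Pi.smul_apply, colv, smul_eq_mul, mulVec, dotProduct, mul_ite,
    mul_zero, Finset.sum_ite_mem, univ_inter]
  exact Finset.sum_congr rfl fun j _ => mul_comm _ _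

lemma noise_bound {m p r : ℕ} (Φ : Matrix (Fin m) (Fin p) ℝ) (ν2 : ℝ) (hν2 : 0 < ν2)
    (hν2min : ∀ x : Fin p → ℝ, x ≠ 0 → sparse r x → ν2 * sqnorm x ≤ sqnorm (Φ.mulVec x))
    (ξ : Fin m → ℝ) (s : Fin p → ℝ) (hs : ∀ j, 0 ≤ s j) (τ : ℝ) (hτ : 0 ≤ τ)
    (hE : ∀ j, (ξ ⬝ᵥ colv Φ j) ^ 2 ≤ τ * s j)
    (S : Finset (Fin p)) (hS : S.card ≤ r) (x : Fin p → ℝ) (hx : ∀ j, j ∉ S → x j = 0) :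
    (ξ ⬝ᵥ Φ.mulVec x) ^ 2 ≤ (τ * (∑ j ∈ S, s j) / ν2) * sqnorm (Φ.mulVec x) := by
  have hnu : ν2 * sqnorm x ≤ sqnorm (Φ.mulVec x) := by
    by_cases h0 : x = 0
    · subst h0; simp [sqnorm]
    · apply hν2min x h0
      have : Function.support x ⊆ (S : Set (Fin p)) := by
        intro j hj
        by_contra hc
        exact hj (hx j hc)
      refine (Set.ncard_le_ncard this (Finset.finite_toSet S)).trans ?_
      rwa [Set.ncard_coe_finset]
  have h1 : ξ ⬝ᵥ Φ.mulVec x = ∑ j ∈ S, x j * (ξ ⬝ᵥ colv Φ j) := by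
    rw [Finset.sum_subset (Finset.subset_univ S) (fun j _ hj => by rw [hx j hj, zero_mul])]
    simp only [dotProduct, mulVec, colv, Finset.mul_sum]
    rw [Finset.sum_comm]
    refine Finset.sum_congr rfl fun j _ => Finset.sum_congr rfl fun i _ => by ring
  have h2 : (ξ ⬝ᵥ Φ.mulVec x) ^ 2 ≤ (∑ j ∈ S, x j ^ 2) * ∑ j ∈ S, (ξ ⬝ᵥ colv Φ j) ^ 2 := by
    rw [h1]; exact Finset.sum_mul_sq_le_sq_mul_sq _ _ _
  have h3 : ∑ j ∈ S, (ξ ⬝ᵥ colv Φ j) ^ 2 ≤ τ * ∑ j ∈ S, s j := by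
    rw [Finset.mul_sum]; exact Finset.sum_le_sum fun j _ => hE j
  have h4 : ∑ j ∈ S, x j ^ 2 ≤ sqnorm x :=
    Finset.sum_le_sum_of_subset_of_nonneg (Finset.subset_univ S) fun j _ _ => sq_nonneg _
  have h5 : 0 ≤ τ * ∑ j ∈ S, s j := mul_nonneg hτ (Finset.sum_nonneg fun j _ => hs j)
  have h6 : sqnorm x ≤ sqnorm (Φ.mulVec x) / ν2 := by
    rw [le_div_iff₀ hν2]; linarith
  calc (ξ ⬝ᵥ Φ.mulVec x) ^ 2 ≤ sqnorm x * (τ * ∑ j ∈ S, s j) :=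
        h2.trans (mul_le_mul h4 h3 (Finset.sum_nonneg fun j _ => sq_nonneg _) (sqnorm_nonneg' x))
    _ ≤ sqnorm (Φ.mulVec x) / ν2 * (τ * ∑ j ∈ S, s j) := mul_le_mul_of_nonneg_right h6 h5
    _ = _ := by ring

lemma young_bound (q B N σ : ℝ) (hB : 0 ≤ B) (hN : 0 ≤ N) (h : q ^ 2 ≤ B * N) :
    2 * σ * q ≤ N / 2 + 2 * σ ^ 2 * B := by
  refine le_of_abs_le (abs_le_of_sq_le_sq ?_ (by positivity))
  have := mul_le_mul_of_nonneg_left h (sq_nonneg σ)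
  nlinarith [sq_nonneg (N / 2 - 2 * σ ^ 2 * B)]

/-- Deterministic consequence of minimality (Q-aggregation). -/
lemma qagg {m p : ℕ} (C : Finset (Finset (Fin p)))
    (H : Finset (Fin p) → Matrix (Fin m) (Fin m) ℝ) (z : Fin m → ℝ)
    (U : Finset (Fin p) → ℝ) (θ : Finset (Fin p) → ℝ)
    (hnn : ∀ M ∈ C, 0 ≤ θ M) (hsum : ∑ M ∈ C, θ M = 1)
    (hmin : ∀ θ' : Finset (Fin p) → ℝ, (∀ M ∈ C, 0 ≤ θ' M) → (∑ M ∈ C, θ' M = 1) →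
      aggCrit C H z U θ ≤ aggCrit C H z U θ') (M0 : Finset (Fin p)) (hM0 : M0 ∈ C) :
    2 * sqnorm (z - aggEst C H z θ) +
      ∑ M ∈ C, θ M * (sqnorm ((H M).mulVec z - (H M0).mulVec z) + 2 * U M) ≤
    2 * sqnorm (z - (H M0).mulVec z) + 2 * U M0 := by
  set g := aggEst C H z θ with hg
  set g0 := (H M0).mulVec z with hg0
  set c : Finset (Fin p) → ℝ := fun M => sqnorm (z - (H M).mulVec z) + 2 * U M with hc
  -- perturbation
  have key : ∀ t : ℝ, 0 ≤ t → t ≤ 1 →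
      0 ≤ t * (c M0 - ∑ M ∈ C, θ M * c M) - 2 * t * ((z - g) ⬝ᵥ (g0 - g))
        + t ^ 2 * sqnorm (g0 - g) := by
    intro t ht0 ht1
    have h := hmin (fun M => (1 - t) * θ M + t * (if M = M0 then 1 else 0)) ?_ ?_
    · have e1 : aggEst C H z (fun M => (1 - t) * θ M + t * (if M = M0 then 1 else 0)) =
          g + t • (g0 - g) := by
        simp only [aggEst, add_smul, Finset.sum_add_distrib, mul_smul, ← Finset.smul_sum]
        simp only [ite_smul, one_smul, zero_smul, Finset.sum_ite_eq', hM0, if_true]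
        rw [hg, aggEst, ← hg0, sub_smul, one_smul, smul_sub]
        abel
      have e2 : ∑ M ∈ C, ((1 - t) * θ M + t * (if M = M0 then 1 else 0)) * c M =
          (1 - t) * (∑ M ∈ C, θ M * c M) + t * c M0 := by
        simp only [add_mul, Finset.sum_add_distrib, mul_assoc, ← Finset.mul_sum]
        simp [hM0]
      unfold aggCrit at h
      rw [e1] at h
      simp only [← hg] at h
      change ∑ M ∈ C, θ M * c M + _ ≤ ∑ M ∈ C, ((1 - t) * θ M + t * (if M = M0 then 1 else 0)) * c M + _ at h
      rw [e2] at h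
      have e3 : sqnorm (z - (g + t • (g0 - g))) =
          sqnorm (z - g) - 2 * t * ((z - g) ⬝ᵥ (g0 - g)) + t ^ 2 * sqnorm (g0 - g) := by
        simp only [sqnorm_eq]
        rw [← sub_sub]
        generalize z - g = u
        generalize g0 - g = w
        rw [sub_dotProduct, dotProduct_sub, dotProduct_sub, smul_dotProduct, dotProduct_smul,
          smul_dotProduct, dotProduct_smul, dotProduct_comm w u]
        simp only [smul_eq_mul]; ring
      rw [e3] at h
      linarith
    · intro M hM
      have := hnn M hM
      have h1 : 0 ≤ 1 - t := by linarith
      split_ifs <;> positivity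
    · rw [Finset.sum_add_distrib, ← Finset.mul_sum, hsum, ← Finset.mul_sum]
      simp [hM0]
  set a := (c M0 - ∑ M ∈ C, θ M * c M) - 2 * ((z - g) ⬝ᵥ (g0 - g)) with ha
  have hQ := sqnorm_nonneg' (g0 - g)
  have ha0 : 0 ≤ a := by
    by_contra hneg
    push Not at hneg
    set Q := sqnorm (g0 - g)
    have hd : 0 < Q - a := by linarith
    set t := (-a) / (2 * (Q - a)) with htd
    have ht0 : 0 < t := div_pos (by linarith) (by linarith)
    have htm : t * (2 * (Q - a)) = -a := div_mul_cancel₀ _ (by positivity)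
    have ht1 : t ≤ 1 := by
      rw [htd, div_le_one (by linarith)]; linarith
    have hk := key t ht0.le ht1
    have hk2 : 0 ≤ t * (a + t * Q) := by rw [ha]; linarith
    have hk3 : 0 ≤ a + t * Q := nonneg_of_mul_nonneg_right hk2 ht0
    nlinarith
  -- expand
  have e4 : ∑ M ∈ C, θ M * (sqnorm ((H M).mulVec z - g0) + 2 * U M) =
      ∑ M ∈ C, θ M * c M - 2 * ((z - g) ⬝ᵥ (z - g0)) + sqnorm (z - g0) := by
    have e5 : ∀ M, θ M * (sqnorm ((H M).mulVec z - g0) + 2 * U M) =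
        θ M * c M - 2 * ((θ M • (z - (H M).mulVec z)) ⬝ᵥ (z - g0)) + θ M * sqnorm (z - g0) := by
      intro M
      simp only [hc, sqnorm_eq, smul_dotProduct]
      rw [show (H M).mulVec z - g0 = (z - g0) - (z - (H M).mulVec z) by abel]
      generalize z - g0 = u
      generalize z - (H M).mulVec z = w
      rw [sub_dotProduct, dotProduct_sub, dotProduct_sub, dotProduct_comm w u]
      simp only [smul_eq_mul]; ring
    rw [Finset.sum_congr rfl fun M _ => e5 M, Finset.sum_add_distrib, Finset.sum_sub_distrib,
      ← Finset.sum_mul, hsum, one_mul, ← Finset.mul_sum, ← sum_dotProduct]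
    congr 3
    simp only [smul_sub, Finset.sum_sub_distrib, ← Finset.sum_smul, hsum, one_smul]
    rw [hg, aggEst]
  rw [e4]
  have e6 : (z - g) ⬝ᵥ (g0 - g) = sqnorm (z - g) - (z - g) ⬝ᵥ (z - g0) := by
    rw [sqnorm_eq, ← dotProduct_sub]; congr 1; abel
  have e7 : c M0 = sqnorm (z - g0) + 2 * U M0 := rfl
  rw [e6, e7] at ha
  linarith

lemma proj_self {m p : ℕ} {Φ : Matrix (Fin m) (Fin p) ℝ} {M : Finset (Fin p)}
    {H : Matrix (Fin m) (Fin m) ℝ} (hH : IsProjOnto Φ M H) (u v : Fin m → ℝ) :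
    H.mulVec u ⬝ᵥ H.mulVec v = u ⬝ᵥ H.mulVec v := by
  have hs : H.vecMul u = H.mulVec u := by
    rw [← Matrix.mulVec_transpose, hH.1]
  rw [← hs, ← Matrix.dotProduct_mulVec, Matrix.mulVec_mulVec, hH.2.1]

lemma det_oracle {n m p r : ℕ} (A : Matrix (Fin n) (Fin m) ℝ)
    (Φ : Matrix (Fin m) (Fin p) ℝ)
    (σ δ ν2 : ℝ) (hν2 : 0 < ν2) (hτ : 0 ≤ 2 * (δ + 1) * Real.log p)
    (hν2min : ∀ x : Fin p → ℝ, x ≠ 0 → sparse r x → ν2 * sqnorm x ≤ sqnorm (Φ.mulVec x))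
    (H : Finset (Fin p) → Matrix (Fin m) (Fin m) ℝ)
    (hH : ∀ M : Finset (Fin p), IsProjOnto Φ M (H M))
    (f ξ z : Fin m → ℝ) (hz : z = f + σ • ξ)
    (hE : ∀ j, (ξ ⬝ᵥ colv Φ j) ^ 2 ≤ 2 * (δ + 1) * Real.log p * sqnorm (colv (Psi A Φ) j))
    (θ : Finset (Fin p) → ℝ)
    (hnn : ∀ M ∈ models p r, 0 ≤ θ M) (hsum : ∑ M ∈ models p r, θ M = 1)
    (hmin : ∀ θ' : Finset (Fin p) → ℝ, (∀ M ∈ models p r, 0 ≤ θ' M) →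
      (∑ M ∈ models p r, θ' M = 1) →
      aggCrit (models p r) H z (Ufun A Φ σ δ ν2) θ ≤ aggCrit (models p r) H z (Ufun A Φ σ δ ν2) θ')
    (M0 : Finset (Fin p)) (hM0 : M0 ∈ models p r) :
    sqnorm (aggEst (models p r) H z θ - f) ≤ sqnorm ((H M0).mulVec f - f) +
      10 / ν2 * σ ^ 2 * (δ + 1) * frob2 (restr (Psi A Φ) M0) * Real.log p := by
  have hq := qagg (models p r) H z (Ufun A Φ σ δ ν2) θ hnn hsum hmin M0 hM0
  set U := Ufun A Φ σ δ ν2 with hU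
  set s : Fin p → ℝ := fun j => sqnorm (colv (Psi A Φ) j) with hs
  have hsnn : ∀ j, 0 ≤ s j := fun j => sqnorm_nonneg' _
  set τ := 2 * (δ + 1) * Real.log p with hτd
  have hUe : ∀ M, U M = 2 * σ ^ 2 * (τ * (∑ j ∈ M, s j) / ν2) := by
    intro M
    simp only [hU, Ufun, frob2_restr, hτd, hs]
    ring
  have hcard : ∀ M ∈ models p r, 2 * M.card ≤ r := by
    intro M hM
    simpa [models] using hM
  set g := aggEst (models p r) H z θ with hg
  set g0 := (H M0).mulVec z with hg0
  have hd : ∀ M ∈ models p r, 2 * σ * (ξ ⬝ᵥ ((H M).mulVec z - g0)) ≤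
      sqnorm ((H M).mulVec z - g0) / 2 + U M + U M0 := by
    intro M hM
    obtain ⟨x, hx, hxe⟩ := proj_mem (hH M) z
    obtain ⟨x0, hx0, hx0e⟩ := proj_mem (hH M0) z
    have he : (H M).mulVec z - g0 = Φ.mulVec (x - x0) := by
      rw [hg0, hxe, hx0e, Matrix.mulVec_sub]
    rw [he]
    have hc : (M ∪ M0).card ≤ r := by
      have := Finset.card_union_le M M0
      have := hcard M hM
      have := hcard M0 hM0
      omega
    have hb := noise_bound Φ ν2 hν2 hν2min ξ s hsnn τ hτ hE (M ∪ M0) hc (x - x0) (by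
      intro j hj
      simp only [Finset.mem_union, not_or] at hj
      simp [hx j hj.1, hx0 j hj.2])
    have hle : ∑ j ∈ M ∪ M0, s j ≤ ∑ j ∈ M, s j + ∑ j ∈ M0, s j := by
      rw [← Finset.sum_union_inter]
      exact le_add_of_nonneg_right (Finset.sum_nonneg fun j _ => hsnn j)
    have hB : 0 ≤ τ * (∑ j ∈ M ∪ M0, s j) / ν2 :=
      div_nonneg (mul_nonneg hτ (Finset.sum_nonneg fun j _ => hsnn j)) hν2.le
    have hy := young_bound _ _ _ σ hB (sqnorm_nonneg' _) hb
    have hle2 : 2 * σ ^ 2 * (τ * (∑ j ∈ M ∪ M0, s j) / ν2) ≤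
        2 * σ ^ 2 * (τ * (∑ j ∈ M, s j + ∑ j ∈ M0, s j) / ν2) := by gcongr
    have hUU : 2 * σ ^ 2 * (τ * (∑ j ∈ M, s j + ∑ j ∈ M0, s j) / ν2) = U M + U M0 := by
      rw [hUe, hUe]; ring
    linarith
  have hsumd : 2 * σ * (ξ ⬝ᵥ (g - g0)) ≤
      ∑ M ∈ models p r, θ M * (sqnorm ((H M).mulVec z - g0) + 2 * U M) / 2 + U M0 := by
    have e1 : g - g0 = ∑ M ∈ models p r, θ M • ((H M).mulVec z - g0) := by
      simp only [smul_sub, Finset.sum_sub_distrib, ← Finset.sum_smul, hsum, one_smul]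
      rw [hg, aggEst]
    have e2 : U M0 = ∑ M ∈ models p r, θ M * U M0 := by
      rw [← Finset.sum_mul, hsum, one_mul]
    rw [e1, e2, dotProduct_sum, Finset.mul_sum, ← Finset.sum_add_distrib]
    refine Finset.sum_le_sum fun M hM => ?_
    have := mul_le_mul_of_nonneg_left (hd M hM) (hnn M hM)
    rw [dotProduct_smul, smul_eq_mul]
    linarith
  rw [← Finset.sum_div] at hsumd
  have hexp : ∀ v, sqnorm (z - v) = sqnorm (v - f) - 2 * σ * (ξ ⬝ᵥ (v - f)) + σ ^ 2 * sqnorm ξ := by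
    intro v
    rw [hz, show f + σ • ξ - v = σ • ξ - (v - f) by abel]
    generalize v - f = u
    simp only [sqnorm_eq, sub_dotProduct, dotProduct_sub, smul_dotProduct, dotProduct_smul,
      dotProduct_comm u ξ, smul_eq_mul]
    ring
  have hxi : ξ ⬝ᵥ (g - f) - ξ ⬝ᵥ (g0 - f) = ξ ⬝ᵥ (g - g0) := by
    rw [← dotProduct_sub]; congr 1; abel
  have hmain : sqnorm (g - f) ≤ sqnorm (g0 - f) + 2 * U M0 := by
    rw [hexp, hexp] at hq
    have : 2 * σ * (ξ ⬝ᵥ (g - f)) - 2 * σ * (ξ ⬝ᵥ (g0 - f)) = 2 * σ * (ξ ⬝ᵥ (g - g0)) := by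
      rw [← hxi]; ring
    linarith
  have hpy : sqnorm (g0 - f) = sqnorm ((H M0).mulVec f - f) + σ ^ 2 * sqnorm ((H M0).mulVec ξ) := by
    have e : g0 - f = ((H M0).mulVec f - f) + σ • (H M0).mulVec ξ := by
      rw [hg0, hz, Matrix.mulVec_add, Matrix.mulVec_smul]; abel
    have h0 : ((H M0).mulVec f - f) ⬝ᵥ (H M0).mulVec ξ = 0 := by
      rw [sub_dotProduct, proj_self (hH M0), sub_self]
    have h0' : (H M0).mulVec ξ ⬝ᵥ ((H M0).mulVec f - f) = 0 := by rw [dotProduct_comm, h0]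
    rw [e]
    generalize (H M0).mulVec f - f = u at *
    generalize (H M0).mulVec ξ = w at *
    simp only [sqnorm_eq, add_dotProduct, dotProduct_add, smul_dotProduct, dotProduct_smul,
      h0, h0', smul_eq_mul]
    ring
  have hN : sqnorm ((H M0).mulVec ξ) ≤ τ * (∑ j ∈ M0, s j) / ν2 := by
    obtain ⟨x, hx, hxe⟩ := proj_mem (hH M0) ξ
    have hb := noise_bound Φ ν2 hν2 hν2min ξ s hsnn τ hτ hE M0
      (by have := hcard M0 hM0; omega) x hx
    have hB : 0 ≤ τ * (∑ j ∈ M0, s j) / ν2 :=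
      div_nonneg (mul_nonneg hτ (Finset.sum_nonneg fun j _ => hsnn j)) hν2.le
    rw [← hxe, ← proj_self (hH M0), ← sqnorm_eq] at hb
    have hN0 := sqnorm_nonneg' ((H M0).mulVec ξ)
    rcases hN0.eq_or_lt with h | h
    · rw [← h]; exact hB
    · rw [sq] at hb
      exact le_of_mul_le_mul_right hb h
  have hN2 := mul_le_mul_of_nonneg_left hN (sq_nonneg σ)
  have hfin : 10 / ν2 * σ ^ 2 * (δ + 1) * frob2 (restr (Psi A Φ) M0) * Real.log p =
      2 * U M0 + σ ^ 2 * (τ * (∑ j ∈ M0, s j) / ν2) := by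
    rw [hUe, frob2_restr, hτd]; ring
  rw [hfin]
  linarith

lemma gram_unit {n m : ℕ} (A : Matrix (Fin n) (Fin m) ℝ) (hrank : A.rank = m) :
    IsUnit (Aᵀ * A).det := by
  rw [← Matrix.isUnit_iff_isUnit_det]
  have h : (Aᵀ * A).rank = m := by rw [Matrix.rank_transpose_mul_self, hrank]
  have hinj : LinearMap.ker (Aᵀ * A).mulVecLin = ⊥ := by
    have h1 := LinearMap.finrank_range_add_finrank_ker (Aᵀ * A).mulVecLin
    rw [Matrix.rank] at h
    simp only [h, Module.finrank_fintype_fun_eq_card, Fintype.card_fin] at h1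
    exact Submodule.finrank_eq_zero.1 (by omega)
  rw [← Matrix.mulVec_injective_iff_isUnit]
  exact LinearMap.ker_eq_bot.1 hinj

lemma zv_eq {n m : ℕ} (A : Matrix (Fin n) (Fin m) ℝ) (hrank : A.rank = m) (f : Fin m → ℝ)
    (σ : ℝ) (e : Fin n → ℝ) : zv A f σ e = f + σ • xiv A e := by
  rw [zv, xiv, Matrix.mulVec_add, Matrix.mulVec_mulVec, Matrix.mul_assoc,
    Matrix.nonsing_inv_mul _ (gram_unit A hrank), Matrix.one_mulVec, Matrix.mulVec_smul]

lemma xiv_col {n m p : ℕ} (A : Matrix (Fin n) (Fin m) ℝ) (Φ : Matrix (Fin m) (Fin p) ℝ)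
    (e : Fin n → ℝ) (j : Fin p) : xiv A e ⬝ᵥ colv Φ j = ip (colv (Psi A Φ) j) e := by
  have h1 : colv (Psi A Φ) j = (A * (Aᵀ * A)⁻¹).mulVec (colv Φ j) := by
    ext i
    simp [colv, Psi, Matrix.mul_apply, mulVec, dotProduct]
  have h2 : ip (colv (Psi A Φ) j) e = e ⬝ᵥ colv (Psi A Φ) j := by
    rw [dotProduct_comm]; rfl
  rw [h2, h1, Matrix.dotProduct_mulVec, xiv, ← Matrix.mulVec_transpose]
  congr 2
  rw [Matrix.transpose_mul, Matrix.transpose_nonsing_inv, Matrix.transpose_mul,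
    Matrix.transpose_transpose]

/-- Theorem 2, part 1: sharp oracle inequality with high probability for the
Q-aggregation estimator. -/
theorem oracle_Q_aggregation_high_probability
    {n m p r : ℕ} (hp : 2 ≤ p) (hmn : m ≤ n)
    (A : Matrix (Fin n) (Fin m) ℝ) (hrank : A.rank = m)
    (Φ : Matrix (Fin m) (Fin p) ℝ) (hΦnorm : ∀ j, sqnorm (colv Φ j) = 1)
    (σ : ℝ) (hσ : 0 < σ) (δ : ℝ) (hδ : 0 < δ)
    (ν2 : ℝ) (hν2 : 0 < ν2)
    (hν2min : ∀ x : Fin p → ℝ, x ≠ 0 → sparse r x → ν2 * sqnorm x ≤ sqnorm (Φ.mulVec x))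
    (H : Finset (Fin p) → Matrix (Fin m) (Fin m) ℝ)
    (hH : ∀ M : Finset (Fin p), IsProjOnto Φ M (H M))
    {Ω : Type*} [MeasurableSpace Ω] (μ : Measure Ω) [IsProbabilityMeasure μ]
    (ε : Ω → Fin n → ℝ) (hεmeas : Measurable ε)
    (hεdist : Measure.map ε μ = Measure.pi fun _ : Fin n => gaussianReal 0 1)
    (f : Fin m → ℝ)
    (θhat : Ω → Finset (Fin p) → ℝ)
    (hθnn : ∀ ω, ∀ M ∈ models p r, 0 ≤ θhat ω M)
    (hθsum : ∀ ω, ∑ M ∈ models p r, θhat ω M = 1)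
    (hθmin : ∀ ω, ∀ θ : Finset (Fin p) → ℝ,
      (∀ M ∈ models p r, 0 ≤ θ M) → (∑ M ∈ models p r, θ M = 1) →
      aggCrit (models p r) H (zv A f σ (ε ω)) (Ufun A Φ σ δ ν2) (θhat ω) ≤
        aggCrit (models p r) H (zv A f σ (ε ω)) (Ufun A Φ σ δ ν2) θ) :
    ENNReal.ofReal (1 - Real.sqrt (2 / Real.pi) * (p : ℝ) ^ (-δ)) ≤
      μ {ω | ∀ M ∈ models p r,
        sqnorm (aggEst (models p r) H (zv A f σ (ε ω)) (θhat ω) - f) ≤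
          sqnorm ((H M).mulVec f - f) +
            10 / ν2 * σ ^ 2 * (δ + 1) * frob2 (restr (Psi A Φ) M) * Real.log p} := by

  set ℓ := Real.log p with hℓ
  have hp' : (2 : ℝ) ≤ p := by exact_mod_cast hp
  have hp0 : (0 : ℝ) < p := by linarith
  have hl : 1 / 2 ≤ ℓ := by
    have h1 : Real.log 2 ≤ ℓ := Real.log_le_log (by norm_num) hp'
    have h2 := Real.log_two_gt_d9
    linarith
  set τ := 2 * (δ + 1) * ℓ with hτ
  have hτ1 : 1 ≤ τ := by nlinarith
  set t := Real.sqrt τ with ht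
  have ht1 : 1 ≤ t := Real.one_le_sqrt.2 hτ1
  have ht2 : t ^ 2 = τ := Real.sq_sqrt (by linarith)
  set bad : Fin p → Set (Fin n → ℝ) := fun j =>
    {e | t ^ 2 * sqnorm (colv (Psi A Φ) j) < ip (colv (Psi A Φ) j) e ^ 2} with hbad
  have hbm : ∀ j, MeasurableSet (bad j) := by
    intro j
    refine measurableSet_lt measurable_const ?_
    unfold ip; fun_prop
  set B : Set (Fin n → ℝ) := ⋃ j, bad j with hB
  have hBm : MeasurableSet B := MeasurableSet.iUnion hbm
  have hμB : μ (ε ⁻¹' B) ≤ ENNReal.ofReal (Real.sqrt (2 / Real.pi) * (p : ℝ) ^ (-δ)) := by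
    rw [← Measure.map_apply hεmeas hBm, hεdist]
    refine (measure_iUnion_fintype_le _ _).trans ?_
    refine (Finset.sum_le_sum fun j _ => gauss_lin_tail (colv (Psi A Φ) j) t ht1).trans ?_
    rw [Finset.sum_const, Finset.card_univ, Fintype.card_fin, nsmul_eq_mul,
      ← ENNReal.ofReal_natCast, ← ENNReal.ofReal_mul (by positivity)]
    apply ENNReal.ofReal_le_ofReal
    apply le_of_eq
    have : Real.exp (-(t ^ 2) / 2) = (p : ℝ) ^ (-δ) * (p : ℝ)⁻¹ := by
      rw [ht2, ← Real.rpow_neg_one, ← Real.rpow_add hp0, Real.rpow_def_of_pos hp0]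
      congr 1
      rw [hτ]; ring
    rw [this]
    field_simp
  have hsub : (ε ⁻¹' B)ᶜ ⊆ {ω | ∀ M ∈ models p r,
        sqnorm (aggEst (models p r) H (zv A f σ (ε ω)) (θhat ω) - f) ≤
          sqnorm ((H M).mulVec f - f) +
            10 / ν2 * σ ^ 2 * (δ + 1) * frob2 (restr (Psi A Φ) M) * ℓ} := by
    intro ω hω M hM
    refine det_oracle A Φ σ δ ν2 hν2 (by rw [← hℓ]; linarith) hν2min H hH f (xiv A (ε ω)) _
      (zv_eq A hrank f σ (ε ω)) ?_ (θhat ω) (hθnn ω) (hθsum ω) (hθmin ω) M hM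
    intro j
    rw [xiv_col]
    by_contra hc
    push Not at hc
    apply hω
    refine Set.mem_iUnion.2 ⟨j, ?_⟩
    change t ^ 2 * _ < _
    rw [ht2]
    exact hc
  refine le_trans ?_ (measure_mono hsub)
  rw [measure_compl (hεmeas hBm) (measure_ne_top _ _), measure_univ,
    ENNReal.ofReal_sub _ (by positivity), ENNReal.ofReal_one]
  exact tsub_le_tsub_left hμB 1
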